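/- arXiv:1307.2556 — 5 statements merged into one kernel-verified Lean document; each statement's English description precedes it below -/
import Mathlib

section
/- Let G be a group and V a left G-module. Then for all g ∈ G, D ∈ V and every integer k ≥ 0, the 1-chain g^k⊗D − g⊗(D + g⁻¹·D + g⁻²·D + ⋯ + g^{−(k−1)}·D) is a 1-boundary (for k = 0 the sum is empty, so in particular 1⊗D itself is a 1-boundary). -/
/-!
The claim follows by induction on `k`, with `D` varying. For `k = 0` it says that `1 ⊗ D` is a
boundary, and indeed `1 ⊗ D = ∂₂(1 ⊗ 1 ⊗ D)`. For the step, the boundary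
`∂₂(g ⊗ g^k ⊗ D) = g^k ⊗ g⁻¹D - g^(k+1) ⊗ D + g ⊗ D` reduces `g^(k+1) ⊗ D` to
`g^k ⊗ g⁻¹D + g ⊗ D`, and the case `k` applied to `g⁻¹D` gives the remaining terms of the sum.
-/

open scoped TensorProduct

variable (G : Type*) [Group G] (V : Type*) [AddCommGroup V] [DistribMulAction G V]

/-- The group of 1-chains `C₁(G,V) = ℤ[G] ⊗_ℤ V`. -/
abbrev OneChains := MonoidAlgebra ℤ G ⊗[ℤ] V

/-- The elementary 1-chain `g ⊗ v`. -/
noncomputable def chain (g : G) (v : V) : OneChains G V :=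
  MonoidAlgebra.of ℤ G g ⊗ₜ[ℤ] v

/-- The subgroup of 1-boundaries `B₁(G,V)`: the image of `∂₂`, i.e. the subgroup generated
by the elements `∂₂(g⊗h⊗v) = h⊗(g⁻¹·v) − (gh)⊗v + g⊗v`. -/
noncomputable def oneBoundaries : AddSubgroup (OneChains G V) :=
  AddSubgroup.closure
    {x | ∃ (g h : G) (v : V),
      x = chain G V h (g⁻¹ • v) - chain G V (g * h) v + chain G V g v}

/-- For all `g ∈ G`, `D ∈ V` and `k ≥ 0`, the 1-chain
`g^k⊗D − g⊗(D + g⁻¹·D + ⋯ + g^{−(k−1)}·D)` is a 1-boundary. -/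
theorem chain_pow_sub_mem_oneBoundaries (g : G) (D : V) (k : ℕ) :
    chain G V (g ^ k) D - chain G V g (∑ j ∈ Finset.range k, (g⁻¹ ^ j) • D) ∈
      oneBoundaries G V := by
  have boundary_mem (a b : G) (v : V) :
      chain G V b (a⁻¹ • v) - chain G V (a * b) v + chain G V a v ∈ oneBoundaries G V :=
    AddSubgroup.subset_closure ⟨a, b, v, rfl⟩
  induction k generalizing D with
  | zero => simpa [chain] using boundary_mem 1 1 D
  | succ k ih =>
    have hsum : chain G V g (∑ j ∈ Finset.range (k + 1), (g⁻¹ ^ j) • D) =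
        chain G V g (∑ j ∈ Finset.range k, (g⁻¹ ^ j) • g⁻¹ • D) + chain G V g D := by
      simp only [Finset.sum_range_succ', pow_succ, mul_smul, pow_zero, one_smul, chain,
        TensorProduct.tmul_add]
    rw [hsum, pow_succ']
    convert sub_mem (ih (g⁻¹ • D)) (boundary_mem g (g ^ k) D) using 1
    abel
end

section
/- Let G be a group, V a left G-module, and deg : V → ℤ an additive map satisfying deg(g·v) = deg(v) for all g ∈ G and v ∈ V. Let x₁,…,x_n ∈ G, and let w = x_{i₁}^{a₁}·x_{i₂}^{a₂}·⋯·x_{i_t}^{a_t} be a word in the xⱼ's (with i_s ∈ {1,…,n} and a_s ∈ ℤ) whose product in G is g. For each j ∈ {1,…,n} let vⱼ(w) = Σ_{s : i_s = j} a_s be the total exponent of xⱼ occurring in w. Then for every D ∈ V there exist elements D₁,…,D_n ∈ V such that deg(Dⱼ) = vⱼ(w)·deg(D) for each j, and the 1-chain g⊗D − Σ_{j=1}^n xⱼ⊗Dⱼ is a 1-boundary. -/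
/-!
Modulo boundaries, `g ↦ chain g v` is a crossed homomorphism:
`(gh)⊗v ≡ g⊗v + h⊗(g⁻¹·v)` (`chain_mul_sub_mem`). Applied repeatedly to a power `z ^ a`, this
rule collects the chain `z^a ⊗ v` into a single chain `z ⊗ v'`, where `v'` is a signed sum of
`|a|` translates of `v`, hence of degree `a * deg v` (`exists_chain_zpow`). Applied along the word,
it splits off one power `x_i ^ a` at a time; translating the coefficient by a group element does
not change its degree, so the degree contributions to each `x_j` add up to its total
exponent times `deg D`.
-/

open scoped TensorProduct

variable (G : Type*) [Group G] (V : Type*) [AddCommGroup V] [DistribMulAction G V]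

/-- The crossed homomorphism rule for chains modulo boundaries. -/
lemma chain_mul_sub_mem (g h : G) (v : V) :
    chain G V (g * h) v - (chain G V g v + chain G V h (g⁻¹ • v)) ∈ oneBoundaries G V := by
  have hmem : chain G V h (g⁻¹ • v) - chain G V (g * h) v + chain G V g v ∈ oneBoundaries G V :=
    AddSubgroup.subset_closure ⟨g, h, v, rfl⟩
  convert neg_mem hmem using 1
  abel

lemma chain_add (g : G) (v v' : V) :
    chain G V g (v + v') = chain G V g v + chain G V g v' :=
  TensorProduct.tmul_add _ _ _

lemma chain_sub (g : G) (v v' : V) :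
    chain G V g (v - v') = chain G V g v - chain G V g v' :=
  TensorProduct.tmul_sub _ _ _

lemma chain_zero (g : G) : chain G V g 0 = 0 :=
  TensorProduct.tmul_zero _ _

lemma chain_one_mem (v : V) : chain G V 1 v ∈ oneBoundaries G V := by
  have h := neg_mem (chain_mul_sub_mem G V 1 1 v)
  simpa using h

lemma exists_chain_zpow (deg : V →+ ℤ) (hdeg : ∀ (g : G) (v : V), deg (g • v) = deg v)
    (z : G) (a : ℤ) (v : V) :
    ∃ v' : V, deg v' = a * deg v ∧ chain G V (z ^ a) v - chain G V z v' ∈ oneBoundaries G V := by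
  induction a using Int.induction_on with
  | zero => exact ⟨0, by simp, by simpa [chain_zero] using chain_one_mem G V v⟩
  | succ k ih =>
    obtain ⟨v', hd, hm⟩ := ih
    refine ⟨v' + (z ^ (k : ℤ))⁻¹ • v, by rw [map_add, hd, hdeg]; ring, ?_⟩
    have h := chain_mul_sub_mem G V (z ^ (k : ℤ)) z v
    rw [← zpow_add_one] at h
    rw [chain_add]
    convert add_mem h hm using 1
    abel
  | pred k ih =>
    obtain ⟨v', hd, hm⟩ := ih
    refine ⟨v' - (z ^ (-(k : ℤ) - 1))⁻¹ • v, by rw [map_sub, hd, hdeg]; ring, ?_⟩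
    -- Here `z ^ (-k)` is the product `z ^ (-k - 1) * z`, so the rule is read backwards.
    have h := chain_mul_sub_mem G V (z ^ (-(k : ℤ) - 1)) z v
    rw [← zpow_add_one, sub_add_cancel] at h
    rw [chain_sub]
    convert sub_mem hm h using 1
    abel

/-- Theorem 4.5 of the paper, abstractly: let `deg : V → ℤ` be an additive `G`-invariant
map, let `x₁,…,x_n ∈ G`, and let `w = x_{i₁}^{a₁}⋯x_{i_t}^{a_t}` be a word (encoded as a
list of pairs `(i_s, a_s)`) whose product in `G` is `g`.  Then for every `D ∈ V` there are
`D₁,…,D_n ∈ V` with `deg(Dⱼ) = vⱼ(w)·deg(D)` (where `vⱼ(w)` is the total exponent of `xⱼ`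
in `w`) such that `g⊗D − Σⱼ xⱼ⊗Dⱼ` is a 1-boundary. -/
theorem chain_word_decomposition (deg : V →+ ℤ)
    (hdeg : ∀ (g : G) (v : V), deg (g • v) = deg v)
    (n : ℕ) (x : Fin n → G) (w : List (Fin n × ℤ)) (g : G)
    (hg : g = (w.map (fun q => x q.1 ^ q.2)).prod) (D : V) :
    ∃ Ds : Fin n → V,
      (∀ j : Fin n,
        deg (Ds j) = (w.map (fun q => if q.1 = j then q.2 else 0)).sum * deg D) ∧
      chain G V g D - ∑ j : Fin n, chain G V (x j) (Ds j) ∈ oneBoundaries G V := by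
  induction w generalizing g D with
  | nil =>
    refine ⟨0, by simp, ?_⟩
    simpa [hg, chain_zero] using chain_one_mem G V D
  | cons q w ih =>
    obtain ⟨i, a⟩ := q
    obtain ⟨v', hd, hm⟩ := exists_chain_zpow G V deg hdeg (x i) a D
    obtain ⟨Ds, hDs, hmem⟩ := ih _ rfl ((x i ^ a)⁻¹ • D)
    refine ⟨fun j => (if i = j then v' else 0) + Ds j, fun j => ?_, ?_⟩
    · rw [map_add, hDs, hdeg, List.map_cons, List.sum_cons, add_mul]
      split_ifs <;> simp [hd]
    · have hsum : ∑ j, chain G V (x j) ((if i = j then v' else 0) + Ds j)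
          = chain G V (x i) v' + ∑ j, chain G V (x j) (Ds j) := by
        simp only [chain_add, Finset.sum_add_distrib]
        congr 1
        rw [Finset.sum_eq_single i (fun j _ hj => by rw [if_neg hj.symm, chain_zero]) (by simp),
          if_pos rfl]
      have h := chain_mul_sub_mem G V (x i ^ a) (w.map (fun q => x q.1 ^ q.2)).prod D
      rw [hsum, hg, List.map_cons, List.prod_cons]
      convert add_mem h (add_mem hm hmem) using 1
      abel
end

section
/- Let p be a prime and K a finite extension of ℚ_p, equipped with the unique norm ‖·‖ extending the p-adic absolute value (‖p‖ = p^{−1}), and assume the norm takes values in p^ℤ on K^× (i.e. K/ℚ_p is unramified). Let O_K = {x ∈ K : ‖x‖ ≤ 1} be the ring of integers. Let τ₁, τ₂ ∈ K, let r be a positive integer and m an integer, and assume ‖τⱼ − i‖ > p^{−r} for every integer i and for j = 1, 2. Then there exist α₀ ∈ K^× and elements α_n ∈ O_K for n ≥ 1 such that for every t ∈ ℤ_p the series α₀·(1 + Σ_{n≥1} α_n·p^{2n}·tⁿ) converges in K and equals ((p^{r+1}·t + m) − τ₂) / ((p^{r+1}·t + m) − τ₁) (whose denominator is nonzero for all t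 ∈ ℤ_p). -/
/-!
Put `A = τ₁ - m`, `B = τ₂ - m`, `u = p ^ (r - 1) / A` and `v = p ^ (r - 1) / B`. The function is
`(p ^ (r + 1) t - B) / (p ^ (r + 1) t - A) = (B / A) * (1 - v p² t) / (1 - u p² t)`, so a geometric
series gives `(B / A) * (1 + ∑_{n ≥ 1} (u - v) u ^ (n - 1) p ^ (2 n) t ^ n)`. Since the norm takes
values in `p ^ ℤ`, the strict bounds `‖A‖, ‖B‖ > p ^ (-r)` improve to `‖A‖, ‖B‖ ≥ p ^ (1 - r)`, so
`u` and `v` are integral (`norm_pow_div_le_one`). The norm on `K` is ultrametric, because natural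
numbers have norm at most one, and hence `u - v` is integral as well.
-/

/-- The gain of one power of `p` from discreteness of the value group: an element of norm greater
than `p ^ (-r)` divides `p ^ (r - 1)`. -/
lemma norm_pow_div_le_one {p : ℕ} [hp : Fact p.Prime] {K : Type*} [NormedField K]
    (hunram : ∀ x : K, x ≠ 0 → ∃ k : ℤ, ‖x‖ = (p : ℝ) ^ k)
    (hpK : ‖(p : K)‖ = (p : ℝ)⁻¹) {r : ℕ} {A : K} (hr : 0 < r)
    (hA : (p : ℝ) ^ (-(r : ℤ)) < ‖A‖) : A ≠ 0 ∧ ‖(p : K) ^ (r - 1) / A‖ ≤ 1 := by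
  have hp1 : (1 : ℝ) < p := by exact_mod_cast hp.out.one_lt
  have hp0 : (0 : ℝ) < p := by linarith
  have hA0 : A ≠ 0 := norm_pos_iff.mp (lt_trans (by positivity) hA)
  refine ⟨hA0, ?_⟩
  obtain ⟨k, hk⟩ := hunram A hA0
  rw [hk, zpow_lt_zpow_iff_right₀ hp1] at hA
  have hq : ‖(p : K) ^ (r - 1)‖ = (p : ℝ) ^ (-((r - 1 : ℕ) : ℤ)) := by
    rw [norm_pow, hpK, zpow_neg, zpow_natCast, inv_pow]
  rw [norm_div, hq, hk, div_le_one (by positivity), zpow_le_zpow_iff_right₀ hp1]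
  omega

/-- Lemma 5.2 of the paper: let `K` be a finite unramified extension of `ℚ_p` (the norm,
extending the `p`-adic absolute value, takes values in `p^ℤ` on `K^×`), with ring of
integers `O_K = {x : ‖x‖ ≤ 1}`.  If `τ₁, τ₂ ∈ K` satisfy `‖τⱼ − i‖ > p^{−r}` for all
integers `i`, then the function `t ↦ ((p^{r+1}t + m) − τ₂)/((p^{r+1}t + m) − τ₁)` on `ℤ_p`
is given by a convergent series `α₀·(1 + Σ_{n≥1} α_n p^{2n} tⁿ)` with `α_n ∈ O_K`. -/
theorem analytic_expansion_on_ball (p : ℕ) [Fact p.Prime] (K : Type*) [NormedField K]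
    [Algebra ℚ_[p] K] [FiniteDimensional ℚ_[p] K]
    (hext : ∀ x : ℚ_[p], ‖algebraMap ℚ_[p] K x‖ = ‖x‖)
    (hunram : ∀ x : K, x ≠ 0 → ∃ k : ℤ, ‖x‖ = (p : ℝ) ^ k)
    (τ₁ τ₂ : K) (r : ℕ) (hr : 0 < r) (m : ℤ)
    (h1 : ∀ i : ℤ, ‖τ₁ - (i : K)‖ > (p : ℝ) ^ (-(r : ℤ)))
    (h2 : ∀ i : ℤ, ‖τ₂ - (i : K)‖ > (p : ℝ) ^ (-(r : ℤ))) :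
    ∃ (α₀ : K) (α : ℕ → K), α₀ ≠ 0 ∧ α 0 = 1 ∧ (∀ n : ℕ, 1 ≤ n → ‖α n‖ ≤ 1) ∧
      ∀ t : ℤ_[p],
        algebraMap ℚ_[p] K ((p : ℚ_[p]) ^ (r + 1) * (t : ℚ_[p]) + (m : ℚ_[p])) - τ₁ ≠ 0 ∧
        HasSum
          (fun n : ℕ => α₀ *
            (α n * (p : K) ^ (2 * n) * (algebraMap ℚ_[p] K (t : ℚ_[p])) ^ n))
          ((algebraMap ℚ_[p] K ((p : ℚ_[p]) ^ (r + 1) * (t : ℚ_[p]) + (m : ℚ_[p])) - τ₂) /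
            (algebraMap ℚ_[p] K ((p : ℚ_[p]) ^ (r + 1) * (t : ℚ_[p]) + (m : ℚ_[p])) - τ₁)) := by
  have hp1 : (1 : ℝ) < p := by exact_mod_cast (Fact.out : p.Prime).one_lt
  have hpK : ‖(p : K)‖ = (p : ℝ)⁻¹ := by
    rw [← map_natCast (algebraMap ℚ_[p] K) p, hext, Padic.norm_p]
  have hpK1 : ‖(p : K)‖ < 1 := by
    rw [hpK]
    exact inv_lt_one_of_one_lt₀ hp1
  have : IsUltrametricDist K := by
    refine IsUltrametricDist.isUltrametricDist_of_forall_norm_natCast_le_one fun n => ?_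
    rw [← map_natCast (algebraMap ℚ_[p] K) n, hext]
    exact_mod_cast Padic.norm_int_le_one (p := p) n
  obtain ⟨hA, hu⟩ := norm_pow_div_le_one hunram hpK hr (h1 m)
  obtain ⟨hB, hv⟩ := norm_pow_div_le_one hunram hpK hr (h2 m)
  set A : K := τ₁ - m with hAdef
  set B : K := τ₂ - m with hBdef
  set u : K := (p : K) ^ (r - 1) / A with hudef
  set v : K := (p : K) ^ (r - 1) / B with hvdef
  have hvu : A / B * u = v := by
    rw [hudef, hvdef]
    field_simp
  have hpu : (p : K) ^ (r + 1) = (p : K) ^ 2 * u * A := by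
    rw [hudef, mul_assoc, div_mul_cancel₀ _ hA, ← pow_add]
    congr 1
    omega
  -- For `n ≥ 1` the coefficient `(u - v) u ^ (n - 1)` equals `(1 - A / B) u ^ n`, because
  -- `v = (A / B) u`: the coefficients form a geometric sequence up to a correction at `n = 0`.
  refine ⟨B / A, fun n => (1 - A / B) * u ^ n + if n = 0 then A / B else 0,
    div_ne_zero hB hA, by simp, ?_, ?_⟩
  · intro n hn
    obtain ⟨k, rfl⟩ : ∃ k, n = k + 1 := ⟨n - 1, by omega⟩
    have hcoeff : (1 - A / B) * u ^ (k + 1) + (if k + 1 = 0 then A / B else 0)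
        = (u - v) * u ^ k := by
      rw [if_neg (by omega), ← hvu]
      ring
    dsimp only
    rw [hcoeff, norm_mul, norm_pow]
    have huv : ‖u - v‖ ≤ 1 := by
      rw [sub_eq_add_neg]
      exact (IsUltrametricDist.norm_add_le_max u (-v)).trans (max_le hu (by rwa [norm_neg]))
    exact mul_le_one₀ huv (by positivity) (pow_le_one₀ (norm_nonneg _) hu)
  · intro t
    set T : K := algebraMap ℚ_[p] K (t : ℚ_[p]) with hT
    have hT1 : ‖T‖ ≤ 1 := by
      rw [hT, hext]
      exact t.2
    have hx : ‖(p : K) ^ 2 * u * T‖ < 1 := by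
      rw [norm_mul, norm_mul, norm_pow]
      have hp2 : ‖(p : K)‖ ^ 2 < 1 := pow_lt_one₀ (norm_nonneg _) hpK1 two_ne_zero
      calc ‖(p : K)‖ ^ 2 * ‖u‖ * ‖T‖ ≤ ‖(p : K)‖ ^ 2 * 1 * 1 := by gcongr
        _ < 1 := by linarith
    set x : K := (p : K) ^ 2 * u * T with hxdef
    have hx0 : 1 - x ≠ 0 := by
      intro h
      rw [← sub_eq_zero.mp h, norm_one] at hx
      exact lt_irrefl _ hx
    have hmap : algebraMap ℚ_[p] K ((p : ℚ_[p]) ^ (r + 1) * (t : ℚ_[p]) + (m : ℚ_[p]))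
        = x * A + m := by
      rw [map_add, map_mul, map_pow, map_natCast, map_intCast, hpu, hxdef]
      ring
    have hden : x * A + m - τ₁ = -(A * (1 - x)) := by
      rw [hAdef]
      ring
    have hnum : x * A + m - τ₂ = x * A - B := by
      rw [hBdef]
      ring
    rw [hmap, hden, hnum]
    refine ⟨neg_ne_zero.mpr (mul_ne_zero hA hx0), ?_⟩
    have hs := (((hasSum_geometric_of_norm_lt_one hx).mul_left (1 - A / B)).add
      (hasSum_ite_eq (0 : ℕ) (A / B))).mul_left (B / A)
    have hterm : (fun n : ℕ => B / A *
        (((1 - A / B) * u ^ n + if n = 0 then A / B else 0) * (p : K) ^ (2 * n) * T ^ n))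
        = fun n : ℕ => B / A * ((1 - A / B) * x ^ n + if n = 0 then A / B else 0) := by
      funext n
      congr 1
      rcases eq_or_ne n 0 with rfl | hn
      · simp
      · rw [if_neg hn, hxdef, mul_pow, mul_pow, ← pow_mul]
        ring
    have hsum : (x * A - B) / -(A * (1 - x))
        = B / A * ((1 - A / B) * (1 - x)⁻¹ + A / B) := by
      field_simp
      ring
    rw [hsum]
    exact hterm ▸ hs
end

section
/- Let p be a prime and K a finite extension of ℚ_p, equipped with the unique norm ‖·‖ extending the p-adic absolute value (‖p‖ = p^{−1}), with ring of integers O_K = {x ∈ K : ‖x‖ ≤ 1}. Let τ₁, τ₂ ∈ K and let r be a positive integer with ‖τⱼ − i‖ > p^{−r} for every integer i and j = 1, 2. Let A ∈ GL₂(ℚ_p) be a matrix such that the image A·ℤ_p of ℤ_p under the fractional linear transformation t ↦ (A₁₁t + A₁₂)/(A₂₁t + A₂₂) is a ball contained in ℤ_p of diameter at most p^{−(r+1)} (in particular A₂₁t + A₂₂ ≠ 0 for all t ∈ ℤ_p). Then there exist α₀ ∈ K^× and elements α_n ∈ O_K for n ≥ 1 such that for every t ∈ ℤ_p the series α₀·(1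 + Σ_{n≥1} α_n·pⁿ·tⁿ) converges in K and equals (A·t − τ₂)/(A·t − τ₁). -/
/-!
Write `y t = A·t`, `y₀ = A·0` and `c = A₂₁ / A₂₂`, `δ = det A / A₂₂²`. Then
`y t - y₀ = δ t / (1 + c t)`, hence `y t - τ = (y₀ - τ) (1 + β t) / (1 + c t)` with
`β = c + δ / (y₀ - τ)`, and in the quotient of two such expressions the factor `1 + c t` cancels:
it equals `α₀ (1 + β₂ t) / (1 + β₁ t)`, whose geometric expansion has `n`-th coefficient
`α₀ (β₂ - β₁) (-β₁)ⁿ⁻¹`.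

It remains to see that `β₁` and `β₂` are divisible by `p` in the ring of integers of `K`.
The pole of `A` lies outside `ℤ_p`, so `‖c‖ ≤ 1/p`. The points `A·0` and `A·1` lie in a common
ball of radius `p⁻⁽ʳ⁺¹⁾`, so `‖δ‖ ≤ p⁻⁽ʳ⁺¹⁾`; and since `ℤ` is dense in `ℤ_p`, also
`‖y₀ - τ‖ > p⁻ʳ`. As `K` is ultrametric, the norm of `β` is at most `1/p`.
-/

/-- A norm extending the `p`-adic one is ultrametric: it is at most `1` on the natural numbers. -/
lemma isUltrametricDist_of_extends_padic (p : ℕ) [Fact p.Prime] (K : Type*)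
    [NormedField K] [Algebra ℚ_[p] K]
    (hext : ∀ x : ℚ_[p], ‖algebraMap ℚ_[p] K x‖ = ‖x‖) : IsUltrametricDist K := by
  apply IsUltrametricDist.isUltrametricDist_of_forall_norm_natCast_le_one
  intro n
  have h := hext (n : ℚ_[p])
  rw [map_natCast] at h
  rw [h]
  exact_mod_cast Padic.norm_int_le_one (p := p) (n : ℤ)

lemma norm_sub_le_max_of_ultrametric {K : Type*} [NormedField K] [IsUltrametricDist K]
    (x y : K) : ‖x - y‖ ≤ max ‖x‖ ‖y‖ := by
  simpa [sub_eq_add_neg] using IsUltrametricDist.norm_add_le_max x (-y)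

/-- The norm on `ℚ_p` is discrete: the largest value below `1` is `1/p`. -/
lemma padic_norm_le_inv_of_lt_one (p : ℕ) [Fact p.Prime] {x : ℚ_[p]} (hx : ‖x‖ < 1) :
    ‖x‖ ≤ (p : ℝ)⁻¹ := by
  have h := (PadicInt.norm_le_pow_iff_norm_lt_pow_add_one (⟨x, hx.le⟩ : ℤ_[p]) (-1)).2
    (by simpa using hx)
  simpa using h

/-- If `c t + d` has no zero on `ℤ_p`, its root `-d/c` has norm larger than `1`. -/
lemma norm_div_le_of_no_root (p : ℕ) [Fact p.Prime] {c d : ℚ_[p]}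
    (hden : ∀ t : ℤ_[p], c * (t : ℚ_[p]) + d ≠ 0) : ‖c / d‖ ≤ (p : ℝ)⁻¹ := by
  apply padic_norm_le_inv_of_lt_one
  by_contra! h
  have hc : c ≠ 0 := by
    rintro rfl
    simp at h
    linarith
  have hi : ‖-d / c‖ ≤ 1 := by
    have : -d / c = -(c / d)⁻¹ := by rw [inv_div, neg_div]
    rw [this, norm_neg, norm_inv]
    exact inv_le_one_of_one_le₀ h
  apply hden ⟨-d / c, hi⟩
  change c * (-d / c) + d = 0
  field_simp
  ring

/-- A distance bound from the rational integers extends to `ℤ_p` by density. -/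
lemma norm_sub_gt_of_forall_int (p : ℕ) [Fact p.Prime] (K : Type*)
    [NormedField K] [Algebra ℚ_[p] K] [IsUltrametricDist K]
    (hext : ∀ x : ℚ_[p], ‖algebraMap ℚ_[p] K x‖ = ‖x‖) (τ : K) (r : ℕ)
    (h : ∀ i : ℤ, ‖τ - (i : K)‖ > (p : ℝ) ^ (-(r : ℤ))) (y : ℤ_[p]) :
    (p : ℝ) ^ (-(r : ℤ)) < ‖algebraMap ℚ_[p] K (y : ℚ_[p]) - τ‖ := by
  by_contra! hle
  have happr : ‖y - ((y.appr r : ℕ) : ℤ_[p])‖ ≤ (p : ℝ) ^ (-(r : ℤ)) :=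
    (PadicInt.norm_le_pow_iff_mem_span_pow _ _).2 (PadicInt.appr_spec r y)
  have happrK : ‖algebraMap ℚ_[p] K (y : ℚ_[p]) - ((y.appr r : ℤ) : K)‖
      ≤ (p : ℝ) ^ (-(r : ℤ)) := by
    have := hext ((y : ℚ_[p]) - ((y.appr r : ℕ) : ℚ_[p]))
    rw [map_sub, map_natCast] at this
    push_cast
    rw [this]
    exact_mod_cast happr
  have htri := norm_sub_le_max_of_ultrametric
    (algebraMap ℚ_[p] K (y : ℚ_[p]) - ((y.appr r : ℤ) : K))
    (algebraMap ℚ_[p] K (y : ℚ_[p]) - τ)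
  rw [sub_sub_sub_cancel_left] at htri
  exact absurd (htri.trans (max_le happrK hle)) (not_le.2 (h _))

/-- The linear coefficient `β = c + δ / (y₀ - τ)` is divisible by `p`. -/
lemma exists_coeff (p : ℕ) [Fact p.Prime] (K : Type*)
    [NormedField K] [Algebra ℚ_[p] K] [IsUltrametricDist K]
    (hext : ∀ x : ℚ_[p], ‖algebraMap ℚ_[p] K x‖ = ‖x‖) (r : ℕ) {c δ : ℚ_[p]} {u : K}
    (hc : ‖c‖ ≤ (p : ℝ)⁻¹) (hδ : ‖δ‖ ≤ (p : ℝ) ^ (-((r : ℤ) + 1)))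
    (hu : (p : ℝ) ^ (-(r : ℤ)) < ‖u‖) :
    ∃ γ : K, ‖γ‖ ≤ 1 ∧ algebraMap ℚ_[p] K c + algebraMap ℚ_[p] K δ / u = p * γ := by
  have hp : (0 : ℝ) < p := by exact_mod_cast (Fact.out : p.Prime).pos
  have hpK : ‖(p : K)‖ = (p : ℝ)⁻¹ := by
    have := hext (p : ℚ_[p])
    rwa [map_natCast, Padic.norm_p] at this
  have hpK0 : (p : K) ≠ 0 := by
    rw [← norm_pos_iff, hpK]
    positivity
  have hu0 : 0 < ‖u‖ := lt_trans (by positivity) hu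
  refine ⟨(algebraMap ℚ_[p] K c + algebraMap ℚ_[p] K δ / u) / p, ?_, by field_simp⟩
  rw [norm_div, hpK, div_le_one (by positivity)]
  refine (IsUltrametricDist.norm_add_le_max _ _).trans (max_le (by rwa [hext]) ?_)
  rw [norm_div, hext, div_le_iff₀ hu0]
  calc ‖δ‖ ≤ (p : ℝ) ^ (-((r : ℤ) + 1)) := hδ
    _ = (p : ℝ)⁻¹ * (p : ℝ) ^ (-(r : ℤ)) := by
      rw [neg_add, zpow_add₀ hp.ne', zpow_neg_one, mul_comm]
    _ ≤ (p : ℝ)⁻¹ * ‖u‖ := by gcongr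

/-- Geometric expansion of `(1 + x₂) / (1 + x₁)`. -/
lemma hasSum_one_add_div {K : Type*} [NormedField K] {x₁ x₂ : K} (h : ‖x₁‖ < 1) :
    HasSum (fun n : ℕ => if n = 0 then 1 else (x₂ - x₁) * (-x₁) ^ (n - 1))
      ((1 + x₂) / (1 + x₁)) := by
  have h0 : 1 + x₁ ≠ 0 := by
    intro h0
    rw [eq_neg_of_add_eq_zero_right h0, norm_neg, norm_one] at h
    exact lt_irrefl _ h
  have hg := (hasSum_geometric_of_norm_lt_one (ξ := -x₁) (by rwa [norm_neg])).mul_left (x₂ - x₁)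
  rw [← hasSum_nat_add_iff' 1]
  have e : (1 + x₂) / (1 + x₁) - ∑ i ∈ Finset.range 1,
      (if i = 0 then 1 else (x₂ - x₁) * (-x₁) ^ (i - 1)) = (x₂ - x₁) * (1 - -x₁)⁻¹ := by
    rw [Finset.sum_range_one, if_pos rfl, sub_neg_eq_add]
    field_simp
    ring
  rw [e]
  simpa using hg

/-- Proposition 5.3 of the paper: let `K` be a finite extension of `ℚ_p` with the norm
extending the `p`-adic absolute value, and `τ₁, τ₂ ∈ K` with `‖τⱼ − i‖ > p^{−r}` for all
integers `i`.  If `A ∈ GL₂(ℚ_p)` maps `ℤ_p` (by fractional linear transformations) onto a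
ball `a + p^s·ℤ_p ⊆ ℤ_p` of diameter at most `p^{−(r+1)}` (in particular the denominator
`A₂₁t + A₂₂` never vanishes on `ℤ_p`), then `t ↦ (A·t − τ₂)/(A·t − τ₁)` is given on `ℤ_p`
by a convergent series `α₀·(1 + Σ_{n≥1} α_n pⁿ tⁿ)` with `α_n` in the ring of integers
of `K`. -/
theorem analytic_expansion_fractional_linear (p : ℕ) [Fact p.Prime] (K : Type*)
    [NormedField K] [Algebra ℚ_[p] K] [FiniteDimensional ℚ_[p] K]
    (hext : ∀ x : ℚ_[p], ‖algebraMap ℚ_[p] K x‖ = ‖x‖)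
    (τ₁ τ₂ : K) (r : ℕ) (hr : 0 < r)
    (h1 : ∀ i : ℤ, ‖τ₁ - (i : K)‖ > (p : ℝ) ^ (-(r : ℤ)))
    (h2 : ∀ i : ℤ, ‖τ₂ - (i : K)‖ > (p : ℝ) ^ (-(r : ℤ)))
    (A : Matrix (Fin 2) (Fin 2) ℚ_[p]) (hA : IsUnit A.det)
    (hden : ∀ t : ℤ_[p], A 1 0 * (t : ℚ_[p]) + A 1 1 ≠ 0)
    (hball : ∃ (a : ℤ_[p]) (s : ℕ), r + 1 ≤ s ∧
      {y : ℚ_[p] | ∃ t : ℤ_[p],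
          y = (A 0 0 * (t : ℚ_[p]) + A 0 1) / (A 1 0 * (t : ℚ_[p]) + A 1 1)} =
        Set.range (fun z : ℤ_[p] => (a : ℚ_[p]) + (p : ℚ_[p]) ^ s * (z : ℚ_[p]))) :
    ∃ (α₀ : K) (α : ℕ → K), α₀ ≠ 0 ∧ α 0 = 1 ∧ (∀ n : ℕ, 1 ≤ n → ‖α n‖ ≤ 1) ∧
      ∀ t : ℤ_[p],
        HasSum
          (fun n : ℕ => α₀ *
            (α n * (p : K) ^ n * (algebraMap ℚ_[p] K (t : ℚ_[p])) ^ n))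
          ((algebraMap ℚ_[p] K
              ((A 0 0 * (t : ℚ_[p]) + A 0 1) / (A 1 0 * (t : ℚ_[p]) + A 1 1)) - τ₂) /
            (algebraMap ℚ_[p] K
              ((A 0 0 * (t : ℚ_[p]) + A 0 1) / (A 1 0 * (t : ℚ_[p]) + A 1 1)) - τ₁)) := by
  have := isUltrametricDist_of_extends_padic p K hext
  have hp : (1 : ℝ) < p := by exact_mod_cast (Fact.out : p.Prime).one_lt
  obtain ⟨a, s, hs, hball⟩ := hball
  have himg (t : ℤ_[p]) : ∃ z : ℤ_[p], (a : ℚ_[p]) + (p : ℚ_[p]) ^ s * (z : ℚ_[p]) =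
      (A 0 0 * (t : ℚ_[p]) + A 0 1) / (A 1 0 * (t : ℚ_[p]) + A 1 1) := by
    have : (A 0 0 * (t : ℚ_[p]) + A 0 1) / (A 1 0 * (t : ℚ_[p]) + A 1 1) ∈
        Set.range (fun z : ℤ_[p] => (a : ℚ_[p]) + (p : ℚ_[p]) ^ s * (z : ℚ_[p])) :=
      hball ▸ ⟨t, rfl⟩
    exact this
  have hd : A 1 1 ≠ 0 := by simpa using hden 0
  have hcd : A 1 0 + A 1 1 ≠ 0 := by simpa using hden 1
  obtain ⟨z₀, hz₀⟩ := himg 0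
  obtain ⟨z₁, hz₁⟩ := himg 1
  simp only [PadicInt.coe_zero, PadicInt.coe_one, mul_zero, mul_one, zero_add] at hz₀ hz₁
  set c : ℚ_[p] := A 1 0 / A 1 1 with hc_def
  set δ : ℚ_[p] := (A 0 0 * A 1 1 - A 0 1 * A 1 0) / A 1 1 ^ 2 with hδ_def
  have hc : ‖c‖ ≤ (p : ℝ)⁻¹ := norm_div_le_of_no_root p hden
  have hc1 : ‖1 + c‖ ≤ 1 := by
    refine (IsUltrametricDist.norm_add_le_max _ _).trans (max_le norm_one.le ?_)
    exact hc.trans (inv_le_one_of_one_le₀ hp.le)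
  -- `δ = (A·1 - A·0) (1 + c)`, a difference of two points of the ball times an integral element
  have hδ : ‖δ‖ ≤ (p : ℝ) ^ (-((r : ℤ) + 1)) := by
    have e : δ = (p : ℚ_[p]) ^ s * ((z₁ - z₀ : ℤ_[p]) : ℚ_[p]) * (1 + c) := by
      have : (p : ℚ_[p]) ^ s * ((z₁ - z₀ : ℤ_[p]) : ℚ_[p]) =
          (A 0 0 + A 0 1) / (A 1 0 + A 1 1) - A 0 1 / A 1 1 := by
        rw [← hz₀, ← hz₁, PadicInt.coe_sub]
        ring
      rw [this, hδ_def, hc_def]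
      field_simp
      ring
    rw [e, norm_mul, norm_mul, Padic.norm_p_pow]
    have hz : ‖((z₁ - z₀ : ℤ_[p]) : ℚ_[p])‖ ≤ 1 := (z₁ - z₀).2
    have hpow : (p : ℝ) ^ (-(s : ℤ)) ≤ (p : ℝ) ^ (-((r : ℤ) + 1)) :=
      zpow_le_zpow_right₀ hp.le (by omega)
    calc (p : ℝ) ^ (-(s : ℤ)) * ‖((z₁ - z₀ : ℤ_[p]) : ℚ_[p])‖ * ‖1 + c‖
        ≤ (p : ℝ) ^ (-(s : ℤ)) * 1 * 1 := by gcongr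
      _ ≤ _ := by simpa using hpow
  set y₀ : ℤ_[p] := a + (p : ℤ_[p]) ^ s * z₀ with hy₀_def
  have hy₀ : (y₀ : ℚ_[p]) = A 0 1 / A 1 1 := by
    rw [← hz₀, hy₀_def]
    push_cast
    rfl
  have hu₁ := norm_sub_gt_of_forall_int p K hext τ₁ r h1 y₀
  have hu₂ := norm_sub_gt_of_forall_int p K hext τ₂ r h2 y₀
  obtain ⟨γ₁, hγ₁, hβ₁⟩ := exists_coeff p K hext r hc hδ hu₁
  obtain ⟨γ₂, hγ₂, hβ₂⟩ := exists_coeff p K hext r hc hδ hu₂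
  have hpr : (0 : ℝ) < (p : ℝ) ^ (-(r : ℤ)) := by positivity
  have hv₁ : algebraMap ℚ_[p] K (y₀ : ℚ_[p]) - τ₁ ≠ 0 := norm_pos_iff.1 (hpr.trans hu₁)
  have hv₂ : algebraMap ℚ_[p] K (y₀ : ℚ_[p]) - τ₂ ≠ 0 := norm_pos_iff.1 (hpr.trans hu₂)
  refine ⟨(algebraMap ℚ_[p] K (y₀ : ℚ_[p]) - τ₂) / (algebraMap ℚ_[p] K (y₀ : ℚ_[p]) - τ₁),
    fun n => if n = 0 then 1 else (γ₂ - γ₁) * (-γ₁) ^ (n - 1),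
    div_ne_zero hv₂ hv₁, if_pos rfl, ?_, ?_⟩
  · intro n hn
    simp only [if_neg (show n ≠ 0 by omega)]
    rw [norm_mul, norm_pow, norm_neg]
    exact mul_le_one₀ ((norm_sub_le_max_of_ultrametric _ _).trans (max_le hγ₂ hγ₁))
      (by positivity) (pow_le_one₀ (norm_nonneg _) hγ₁)
  · intro t
    have hpK : ‖(p : K)‖ < 1 := by
      have := hext (p : ℚ_[p])
      rw [map_natCast, Padic.norm_p] at this
      rw [this]
      exact inv_lt_one_of_one_lt₀ hp
    set T : K := algebraMap ℚ_[p] K (t : ℚ_[p]) with hT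
    have hT1 : ‖T‖ ≤ 1 := by rw [hT, hext]; exact t.2
    have hx₁ : ‖p * γ₁ * T‖ < 1 := by
      rw [norm_mul, norm_mul, mul_assoc]
      exact mul_lt_one_of_nonneg_of_lt_one_left (norm_nonneg _) hpK
        (mul_le_one₀ hγ₁ (norm_nonneg _) hT1)
    have hct : 1 + c * (t : ℚ_[p]) ≠ 0 := by
      have := div_ne_zero (hden t) hd
      rwa [add_div, div_self hd, mul_div_right_comm, add_comm] at this
    have hctK : 1 + algebraMap ℚ_[p] K c * T ≠ 0 := by
      have := (map_ne_zero (algebraMap ℚ_[p] K)).2 hct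
      simpa using this
    have hyt : (A 0 0 * (t : ℚ_[p]) + A 0 1) / (A 1 0 * (t : ℚ_[p]) + A 1 1) =
        y₀ + δ * t / (1 + c * t) := by
      have e : A 1 0 * (t : ℚ_[p]) + A 1 1 = A 1 1 * (1 + c * t) := by
        rw [hc_def]
        field_simp
        ring
      rw [e, hy₀]
      have e' : A 0 0 * (t : ℚ_[p]) + A 0 1 = A 0 1 * (1 + c * t) + A 1 1 * δ * t := by
        rw [hδ_def, hc_def]
        field_simp
        ring
      rw [e']
      field_simp
    have key (τ γ : K) (hv : algebraMap ℚ_[p] K (y₀ : ℚ_[p]) - τ ≠ 0)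
        (hβ : algebraMap ℚ_[p] K c + algebraMap ℚ_[p] K δ /
          (algebraMap ℚ_[p] K (y₀ : ℚ_[p]) - τ) = p * γ) :
        algebraMap ℚ_[p] K
          ((A 0 0 * (t : ℚ_[p]) + A 0 1) / (A 1 0 * (t : ℚ_[p]) + A 1 1)) - τ =
        (algebraMap ℚ_[p] K (y₀ : ℚ_[p]) - τ) * (1 + p * γ * T) /
          (1 + algebraMap ℚ_[p] K c * T) := by
      rw [hyt, ← hβ]
      simp only [map_add, map_div₀, map_mul, map_one, ← hT]
      have hctK' : 1 + T * algebraMap ℚ_[p] K c ≠ 0 := by rwa [mul_comm T]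
      field_simp
      ring
    rw [key τ₁ γ₁ hv₁ hβ₁, key τ₂ γ₂ hv₂ hβ₂, div_div_div_cancel_right₀ hctK, mul_div_mul_comm]
    refine HasSum.mul_left _ ?_
    have hsum := hasSum_one_add_div (x₂ := p * γ₂ * T) hx₁
    refine Eq.mp (congrArg (fun f => HasSum f _) (funext fun n => ?_)) hsum
    rcases n with _ | n
    · simp
    · simp only [Nat.add_one_ne_zero, if_false, Nat.add_sub_cancel]
      ring
end

section
/- Let p be a prime and M a module over ℤ_p. Let (Filⁿ M)_{n≥0} be a decreasing sequence of ℤ_p-submodules such that the natural map M → lim_n M/Filⁿ M is an isomorphism (equivalently: ⋂_{n≥0} Filⁿ M = {0}, and for every sequence (m_n)_{n≥0} in M with m_{n+1} − m_n ∈ Filⁿ M for all n there exists m ∈ M with m − m_n ∈ Filⁿ M for all n). Let U : M → M be a ℤ_p-linear map with U(Filⁿ M) ⊆ Filⁿ⁺¹ M for every n ≥ 0; in particular U(Fil⁰ M) ⊆ Fil⁰ M, so U induces a ℤ_p-linear map Ū on M/Fil⁰ M. Let α ∈ ℤ_p^×. Then for every m̄ ∈ M/Fil⁰ M with Ū(m̄)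 = α·m̄ there exists a unique m ∈ M such that m reduces to m̄ modulo Fil⁰ M and U(m) = α·m. -/
/-!
Put `V = α⁻¹ U`. It maps `Filⁿ M` into `Filⁿ⁺¹ M`, and `U m = α m` means `V m = m`, so the claim is
a contraction principle for the filtration topology: the iterates `Vⁿ m₀` satisfy
`Vⁿ⁺¹ m₀ - Vⁿ m₀ ∈ Filⁿ M`, their limit is a fixed point of `V` congruent to `m₀` modulo `Fil⁰ M`,
and the difference of two such fixed points lies in every `Filⁿ M`, hence vanishes.
-/

/-- Abstract form of Proposition 5.4 of the paper (Pollack–Pollack lifting): let `M` be a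
`ℤ_p`-module with a decreasing filtration `Filⁿ M` which is separated and complete (every
sequence `(m_n)` with `m_{n+1} − m_n ∈ Filⁿ M` admits a limit `m` with `m − m_n ∈ Filⁿ M`
for all `n`), and `U : M → M` a `ℤ_p`-linear map with `U(Filⁿ M) ⊆ Filⁿ⁺¹ M`.  Then for
`α ∈ ℤ_p^×`, every `U`-eigenvector with eigenvalue `α` in `M/Fil⁰ M` (represented by some
`m₀ ∈ M` with `U m₀ − α·m₀ ∈ Fil⁰ M`) lifts to a unique `m ∈ M` with `m ≡ m₀ mod Fil⁰ M`
and `U m = α·m`. -/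
theorem unique_eigenlift_of_filtration (p : ℕ) [Fact p.Prime]
    (M : Type*) [AddCommGroup M] [Module ℤ_[p] M]
    (Fil : ℕ → Submodule ℤ_[p] M)
    (hdec : ∀ n : ℕ, Fil (n + 1) ≤ Fil n)
    (hsep : ∀ m : M, (∀ n : ℕ, m ∈ Fil n) → m = 0)
    (hcomp : ∀ s : ℕ → M, (∀ n : ℕ, s (n + 1) - s n ∈ Fil n) →
      ∃ m : M, ∀ n : ℕ, m - s n ∈ Fil n)
    (U : M →ₗ[ℤ_[p]] M)
    (hU : ∀ n : ℕ, ∀ x ∈ Fil n, U x ∈ Fil (n + 1))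
    (α : ℤ_[p]ˣ)
    (m₀ : M) (hm₀ : U m₀ - (α : ℤ_[p]) • m₀ ∈ Fil 0) :
    ∃! m : M, m - m₀ ∈ Fil 0 ∧ U m = (α : ℤ_[p]) • m := by
  obtain ⟨V, hVdef⟩ : ∃ V : M →ₗ[ℤ_[p]] M, V = ((α⁻¹ : ℤ_[p]ˣ) : ℤ_[p]) • U := ⟨_, rfl⟩
  have hVapp (x : M) : V x = ((α⁻¹ : ℤ_[p]ˣ) : ℤ_[p]) • U x := by rw [hVdef]; rfl
  have hV (n : ℕ) (x : M) (hx : x ∈ Fil n) : V x ∈ Fil (n + 1) := by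
    rw [hVapp]
    exact (Fil (n + 1)).smul_mem _ (hU n x hx)
  have hfix (x : M) : U x = (α : ℤ_[p]) • x ↔ V x = x := by
    rw [hVapp]
    constructor
    · intro h
      rw [h, smul_smul, Units.inv_mul, one_smul]
    · intro h
      conv_rhs => rw [← h]
      rw [smul_smul, Units.mul_inv, one_smul]
  have hstep (n : ℕ) : V^[n + 1] m₀ - V^[n] m₀ ∈ Fil n := by
    induction n with
    | zero =>
      have h := (Fil 0).smul_mem ((α⁻¹ : ℤ_[p]ˣ) : ℤ_[p]) hm₀
      rw [smul_sub, smul_smul, Units.inv_mul, one_smul, ← hVapp] at h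
      exact h
    | succ n ih =>
      rw [Function.iterate_succ_apply' V (n + 1), Function.iterate_succ_apply' V n, ← map_sub,
        ← Function.iterate_succ_apply' V n]
      exact hV n _ ih
  obtain ⟨m, hm⟩ := hcomp (fun n => V^[n] m₀) hstep
  have hVm : V m = m := by
    refine sub_eq_zero.1 (hsep _ fun n => hdec n ?_)
    -- `V m - m = V (m - Vⁿ m₀) - (m - Vⁿ⁺¹ m₀)`, and both terms lie in `Filⁿ⁺¹ M`.
    have h := (Fil (n + 1)).sub_mem (hV n _ (hm n)) (hm (n + 1))
    simpa only [map_sub, Function.iterate_succ_apply', sub_sub_sub_cancel_right] using h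
  refine ⟨m, ⟨hm 0, (hfix m).2 hVm⟩, ?_⟩
  rintro m' ⟨hm', hUm'⟩
  refine sub_eq_zero.1 (hsep _ fun n => ?_)
  induction n with
  | zero => simpa using (Fil 0).sub_mem hm' (hm 0)
  | succ n ih =>
    have h := hV n _ ih
    rwa [map_sub, (hfix m').1 hUm', hVm] at h
end
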